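/- Let ν be a σ-invariant Gibbs measure for a d-Hölder continuous φ : Σ_A → ℝ with pressure P (i.e. ν is the unique equilibrium measure of φ). Then h := P − ∫_{Σ_A} φ dν > 0 (h equals the measure-theoretic entropy h_ν(σ) by the variational principle), and for every x ∈ Σ_A^* ∪ {∅}, defining Ξ_x(t) := Σ ν([y]) where the sum runs over all y ∈ Σ_A^* with [y] ⊆ [x] and ν([y]) > t, one has Ξ_x(e^{−r}) ∼ ν([x]) r / h as r → ∞, i.e. lim_{r→∞} Ξ_x(e^{−r}) / r = ν([x]) / h. -/

import Mathlib

open MeasureTheory Filter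
open scoped ENNReal NNReal

namespace SFT

variable {l : ℕ}

/-- The one-sided subshift of finite type determined by the `l × l` matrix `A`:
infinite sequences with transitions allowed by `A`. -/
abbrev SigmaA (l : ℕ) (A : Matrix (Fin l) (Fin l) ℕ) : Type :=
  {ω : ℕ → Fin l // ∀ k, A (ω k) (ω (k + 1)) = 1}

/-- The left shift `σ` on `SigmaA l A`. -/
def shift {A : Matrix (Fin l) (Fin l) ℕ} (ω : SigmaA l A) : SigmaA l A :=
  ⟨fun n => ω.1 (n + 1), fun k => ω.2 (k + 1)⟩

/-- Birkhoff sums `S_k φ = ∑_{m<k} φ ∘ σ^m`. -/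
def birkhoff {A : Matrix (Fin l) (Fin l) ℕ} (φ : SigmaA l A → ℝ) (k : ℕ) (ω : SigmaA l A) : ℝ :=
  ∑ m ∈ Finset.range k, φ (shift^[m] ω)

/-- The matrix `A` has `0`-`1` entries and is irreducible and aperiodic
(some power of `A` has all entries strictly positive). -/
def Primitive (A : Matrix (Fin l) (Fin l) ℕ) : Prop :=
  (∀ i j, A i j = 0 ∨ A i j = 1) ∧ ∃ n : ℕ, 0 < n ∧ ∀ i j, 0 < (A ^ n) i j

/-- A finite word is admissible, i.e. belongs to `Σ_A^*`. -/
def Admissible (A : Matrix (Fin l) (Fin l) ℕ) (x : List (Fin l)) : Prop :=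
  x ≠ [] ∧ ∀ (i : ℕ) (h : i + 1 < x.length), A (x[i]'(by omega)) (x[i + 1]'h) = 1

/-- The cylinder set `[x]` of a finite word (the empty word gives all of `Σ_A`). -/
def cylinder (A : Matrix (Fin l) (Fin l) ℕ) (x : List (Fin l)) : Set (SigmaA l A) :=
  {ω | ∀ (i : ℕ) (h : i < x.length), ω.1 i = x[i]'h}

/-- The initial word `(ω_1, …, ω_k)` of `ω`. -/
def wordPrefix {A : Matrix (Fin l) (Fin l) ℕ} (ω : SigmaA l A) (k : ℕ) : List (Fin l) :=
  List.ofFn (fun i : Fin k => ω.1 i)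

/-- `μ` is a Gibbs measure for the potential `φ` with pressure `P`:
`c⁻¹ ≤ μ([ω_1,…,ω_k]) / exp(S_kφ(ω) − kP) ≤ c` for some `c > 1`. -/
def IsGibbs {A : Matrix (Fin l) (Fin l) ℕ} (φ : SigmaA l A → ℝ) (P : ℝ)
    (μ : Measure (SigmaA l A)) : Prop :=
  ∃ c : ℝ, 1 < c ∧ ∀ (ω : SigmaA l A) (k : ℕ), 0 < k →
    c⁻¹ ≤ (μ (cylinder A (wordPrefix ω k))).toReal / Real.exp (birkhoff φ k ω - k * P) ∧
      (μ (cylinder A (wordPrefix ω k))).toReal / Real.exp (birkhoff φ k ω - k * P) ≤ c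

/-- `φ` is Hölder continuous with respect to the metric `d(ω,υ) = 2^{-(ω ∧ υ)}`:
there are `C` and an exponent `s > 0` with `|φ(ω) − φ(υ)| ≤ C ⬝ d(ω,υ)^s`, i.e.
`|φ(ω) − φ(υ)| ≤ C ⬝ 2^{-sn}` whenever `ω` and `υ` agree in their first `n` coordinates. -/
def HolderCont {A : Matrix (Fin l) (Fin l) ℕ} (φ : SigmaA l A → ℝ) : Prop :=
  ∃ C s : ℝ, 0 < s ∧ ∀ (ω υ : SigmaA l A) (n : ℕ),
    (∀ i < n, ω.1 i = υ.1 i) → |φ ω - φ υ| ≤ C * (2 : ℝ) ^ (-(s * n))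

/-- `Ξ_x(t)`: the total `ν`-measure of the cylinders `[y] ⊆ [x]`, `y ∈ Σ_A^*`,
with `ν([y]) > t`. -/
noncomputable def xiSum (A : Matrix (Fin l) (Fin l) ℕ) (ν : Measure (SigmaA l A))
    (x : List (Fin l)) (t : ℝ) : ℝ :=
  ∑' y : List (Fin l),
    Set.indicator
      {y | Admissible A y ∧ cylinder A y ⊆ cylinder A x ∧ t < (ν (cylinder A y)).toReal}
      (fun y => (ν (cylinder A y)).toReal) y

/-!
By the Gibbs property, `-log ν([ω_1, …, ω_k])` differs from `k P - S_k φ(ω)` by a bounded amount, so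
by the mean ergodic theorem `-log ν([ω_1, …, ω_k]) / k` converges in measure to `h = P - ∫ φ dν`.
Hence most points of `[x]` have about `r / h` initial cylinders of mass greater than `e^{-r}`.
Summing `Ξ_x(e^{-r})` over the word length `k`, its `k`-th term is the mass of the points of `[x]`
whose `k`-cylinder is that heavy; this is close to `ν([x])` for `k < (1 - ε) r / h` and close to `0`
for `k > (1 + ε) r / h`. Cylinder masses decay exponentially at a uniform rate, so that only `O(r)`
lengths contribute and the errors are `o(r)`; the same decay gives `h > 0`.
-/

section MeanErgodic

variable {α E : Type*} [MeasurableSpace α] {μ : Measure α} {T : α → α}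
  [NormedAddCommGroup E] {f : α → E}

theorem koopman_birkhoffAverage_toLp [NormedSpace ℝ E] {p : ℝ≥0∞} [Fact (1 ≤ p)]
    (hT : MeasurePreserving T μ μ) (hf : MemLp f p μ) (N : ℕ) :
    (birkhoffAverage ℝ (Lp.compMeasurePreservingₗᵢ ℝ T hT) id N (hf.toLp f) : Lp E p μ) =ᵐ[μ]
      birkhoffAverage ℝ T f N := by
  have hiter : ∀ n, (Lp.compMeasurePreservingₗᵢ ℝ T hT)^[n] (hf.toLp f) =ᵐ[μ] f ∘ T^[n] := by
    intro n
    have : (Lp.compMeasurePreservingₗᵢ ℝ T hT)^[n] (hf.toLp f) =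
        (hf.comp_measurePreserving (hT.iterate n)).toLp _ := by
      rw [← Lp.toLp_compMeasurePreserving hf (hT.iterate n)]
      exact congrFun (Lp.compMeasurePreserving_iterate hT n) _
    rw [this]
    exact MemLp.coeFn_toLp _
  simp only [birkhoffAverage, birkhoffSum, id]
  filter_upwards [Lp.coeFn_smul (N : ℝ)⁻¹ (∑ n ∈ Finset.range N,
      (Lp.compMeasurePreservingₗᵢ ℝ T hT)^[n] (hf.toLp f)),
    Lp.coeFn_finsetSum (Finset.range N)
      fun n => (Lp.compMeasurePreservingₗᵢ ℝ T hT)^[n] (hf.toLp f),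
    ae_all_iff.2 hiter] with x hsmul hsum hx
  rw [hsmul, Pi.smul_apply, hsum, Finset.sum_apply]
  exact congrArg _ (Finset.sum_congr rfl fun n _ => hx n)

theorem memLp_birkhoffAverage [NormedSpace ℝ E] {p : ℝ≥0∞} (hT : MeasurePreserving T μ μ)
    (hf : MemLp f p μ) (N : ℕ) : MemLp (birkhoffAverage ℝ T f N) p μ :=
  (memLp_finsetSum _ fun n _ => hf.comp_measurePreserving (hT.iterate n)).const_smul _

theorem integral_birkhoffAverage [NormedSpace ℝ E] (hT : MeasurePreserving T μ μ)
    (hf : Integrable f μ) {N : ℕ} (hN : N ≠ 0) :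
    ∫ x, birkhoffAverage ℝ T f N x ∂μ = ∫ x, f x ∂μ := by
  have hiter : ∀ n, ∫ x, f (T^[n] x) ∂μ = ∫ x, f x ∂μ := fun n => by
    have h := (hT.iterate n).map_eq
    rw [← integral_map (hT.iterate n).aemeasurable (by rw [h]; exact hf.1), h]
  simp only [birkhoffAverage, birkhoffSum]
  rw [integral_smul,
    integral_finsetSum (f := fun n x => f (T^[n] x)) _
      fun n _ => (hT.iterate n).integrable_comp_of_integrable hf]
  simp only [hiter, Finset.sum_const, Finset.card_range]
  rw [← Nat.cast_smul_eq_nsmul ℝ, inv_smul_smul₀ (Nat.cast_ne_zero.2 hN)]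

variable [InnerProductSpace ℝ E] [CompleteSpace E]

theorem exists_tendsto_eLpNorm_birkhoffAverage_sub_const (hT : Ergodic T μ) (hf : MemLp f 2 μ) :
    ∃ c : E, Tendsto (fun N => eLpNorm (birkhoffAverage ℝ T f N - fun _ => c) 2 μ) atTop
      (nhds 0) := by
  let U := Lp.compMeasurePreservingₗᵢ (p := 2) (E := E) ℝ T hT.toMeasurePreserving
  let g := (U.toContinuousLinearMap.eqLocus (1 : Lp E 2 μ →L[ℝ] Lp E 2 μ)).orthogonalProjectionOnto
    (hf.toLp f)
  have hlim : Tendsto (birkhoffAverage ℝ U id · (hf.toLp f)) atTop (nhds (g : Lp E 2 μ)) :=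
    U.toContinuousLinearMap.tendsto_birkhoffAverage_orthogonalProjection
      U.norm_toContinuousLinearMap_le (hf.toLp f)
  have hg : (g : Lp E 2 μ) ∘ T =ᵐ[μ] (g : Lp E 2 μ) := by
    have hUg : Lp.compMeasurePreserving T hT.toMeasurePreserving (g : Lp E 2 μ) = g := g.2
    have := Lp.coeFn_compMeasurePreserving (g : Lp E 2 μ) hT.toMeasurePreserving
    rw [hUg] at this
    exact this.symm
  obtain ⟨c, hc⟩ := hT.ae_eq_const_of_ae_eq_comp_ae (Lp.aestronglyMeasurable _) hg
  refine ⟨c, ((Lp.tendsto_Lp_iff_tendsto_eLpNorm' _ _).1 hlim).congr fun N => ?_⟩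
  exact eLpNorm_congr_ae ((koopman_birkhoffAverage_toLp hT.toMeasurePreserving hf N).sub hc)

theorem tendsto_eLpNorm_birkhoffAverage_sub_integral [IsProbabilityMeasure μ] (hT : Ergodic T μ)
    (hf : MemLp f 2 μ) :
    Tendsto (fun N => eLpNorm (birkhoffAverage ℝ T f N - fun _ => ∫ x, f x ∂μ) 2 μ) atTop
      (nhds 0) := by
  obtain ⟨c, hc⟩ := exists_tendsto_eLpNorm_birkhoffAverage_sub_const hT hf
  have hmem := memLp_birkhoffAverage hT.toMeasurePreserving hf
  have hL1 : Tendsto (fun N => eLpNorm (birkhoffAverage ℝ T f N - fun _ => c) 1 μ) atTop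
      (nhds 0) :=
    tendsto_of_tendsto_of_tendsto_of_le_of_le tendsto_const_nhds hc (fun _ => zero_le)
      fun N => eLpNorm_le_eLpNorm_of_exponent_le (by norm_num)
        ((hmem N).1.sub aestronglyMeasurable_const)
  have hint : Tendsto (fun N => ∫ x, birkhoffAverage ℝ T f N x ∂μ) atTop (nhds (∫ _, c ∂μ)) :=
    tendsto_integral_of_L1' _ aestronglyMeasurable_const
      (Eventually.of_forall fun N => (hmem N).integrable (by norm_num)) hL1
  have hint' : Tendsto (fun N => ∫ x, birkhoffAverage ℝ T f N x ∂μ) atTop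
      (nhds (∫ x, f x ∂μ)) :=
    tendsto_const_nhds.congr' <| (eventually_ne_atTop 0).mono fun N hN =>
      (integral_birkhoffAverage hT.toMeasurePreserving (hf.integrable (by norm_num)) hN).symm
  have : c = ∫ x, f x ∂μ := by simpa using tendsto_nhds_unique hint hint'
  rwa [← this]

theorem tendstoInMeasure_birkhoffAverage [IsProbabilityMeasure μ] (hT : Ergodic T μ)
    (hf : MemLp f 2 μ) :
    TendstoInMeasure μ (birkhoffAverage ℝ T f) atTop fun _ => ∫ x, f x ∂μ :=
  tendstoInMeasure_of_tendsto_eLpNorm (by norm_num)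
    (fun N => (memLp_birkhoffAverage hT.toMeasurePreserving hf N).1)
    aestronglyMeasurable_const (tendsto_eLpNorm_birkhoffAverage_sub_integral hT hf)

end MeanErgodic

section Cylinders

variable {A : Matrix (Fin l) (Fin l) ℕ}

theorem continuous_coord (i : ℕ) : Continuous fun ω : SigmaA l A => ω.1 i :=
  (continuous_apply i).comp continuous_subtype_val

theorem continuous_shift : Continuous (shift : SigmaA l A → SigmaA l A) :=
  Continuous.subtype_mk (continuous_pi fun n => continuous_coord (n + 1)) _

theorem iterate_shift_apply (ω : SigmaA l A) (n i : ℕ) : (shift^[n] ω).1 i = ω.1 (i + n) := by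
  induction n generalizing i with
  | zero => rfl
  | succ n ih =>
    rw [Function.iterate_succ_apply']
    exact (ih (i + 1)).trans (congrArg ω.1 (by omega))

theorem isOpen_cylinder (x : List (Fin l)) : IsOpen (cylinder A x) := by
  have : cylinder A x = ⋂ i : Fin x.length, {ω : SigmaA l A | ω.1 i = x[i]} := by
    ext ω
    simp [cylinder, Fin.forall_iff]
  rw [this]
  exact isOpen_iInter_of_finite fun i =>
    (isOpen_discrete ({x[i]} : Set (Fin l))).preimage (continuous_coord i)

theorem measurableSet_cylinder (x : List (Fin l)) : MeasurableSet (cylinder A x) :=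
  (isOpen_cylinder x).measurableSet

/-- The cylinder `[ω_1, …, ω_k]` of length `k` around the point `ω`. -/
def cylinderAt (ω : SigmaA l A) (k : ℕ) : Set (SigmaA l A) :=
  cylinder A (wordPrefix ω k)

theorem mem_cylinderAt {ω υ : SigmaA l A} {k : ℕ} :
    υ ∈ cylinderAt ω k ↔ ∀ i < k, υ.1 i = ω.1 i := by
  simp [cylinderAt, cylinder, wordPrefix]

theorem self_mem_cylinderAt (ω : SigmaA l A) (k : ℕ) : ω ∈ cylinderAt ω k :=
  mem_cylinderAt.2 fun _ _ => rfl

theorem cylinderAt_zero (ω : SigmaA l A) : cylinderAt ω 0 = Set.univ :=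
  Set.eq_univ_of_forall fun _ => mem_cylinderAt.2 fun _ hi => absurd hi (Nat.not_lt_zero _)

theorem antitone_cylinderAt (ω : SigmaA l A) : Antitone (cylinderAt ω) := fun _ _ hab _ hυ =>
  mem_cylinderAt.2 fun i hi => mem_cylinderAt.1 hυ i (hi.trans_le hab)

theorem wordPrefix_eq_of_mem_cylinderAt {ω υ : SigmaA l A} {k : ℕ} (h : υ ∈ cylinderAt ω k) :
    wordPrefix υ k = wordPrefix ω k :=
  congrArg List.ofFn (funext fun i => mem_cylinderAt.1 h i i.2)

theorem cylinderAt_eq_of_mem {ω υ : SigmaA l A} {k : ℕ} (h : υ ∈ cylinderAt ω k) :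
    cylinderAt υ k = cylinderAt ω k :=
  congrArg (cylinder A) (wordPrefix_eq_of_mem_cylinderAt h)

theorem measurableSet_cylinderAt (ω : SigmaA l A) (k : ℕ) : MeasurableSet (cylinderAt ω k) :=
  measurableSet_cylinder _

theorem cylinderAt_add (ω : SigmaA l A) (m n : ℕ) :
    cylinderAt ω (m + n) = cylinderAt ω m ∩ shift^[m] ⁻¹' cylinderAt (shift^[m] ω) n := by
  ext υ
  simp only [Set.mem_inter_iff, Set.mem_preimage, mem_cylinderAt, iterate_shift_apply]
  refine ⟨fun h => ⟨fun i hi => h i (by omega), fun i hi => h _ (by omega)⟩, fun h i hi => ?_⟩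
  rcases lt_or_ge i m with him | him
  · exact h.1 i him
  · simpa [Nat.sub_add_cancel him] using h.2 (i - m) (by omega)

theorem cylinderAt_length_eq {ω : SigmaA l A} {x : List (Fin l)} (hω : ω ∈ cylinder A x) :
    cylinderAt ω x.length = cylinder A x := by
  have : wordPrefix ω x.length = x :=
    List.ext_getElem (by simp [wordPrefix]) fun i _ hi => by simpa [wordPrefix] using hω i hi
  rw [cylinderAt, this]

theorem cylinderAt_subset_cylinder {ω : SigmaA l A} {x : List (Fin l)} {k : ℕ}
    (hk : x.length ≤ k) (hω : ω ∈ cylinder A x) : cylinderAt ω k ⊆ cylinder A x :=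
  (antitone_cylinderAt ω hk).trans_eq (cylinderAt_length_eq hω)

theorem admissible_wordPrefix (ω : SigmaA l A) {k : ℕ} (hk : k ≠ 0) :
    Admissible A (wordPrefix ω k) :=
  ⟨by simpa [wordPrefix] using hk, fun i _ => by simpa [wordPrefix] using ω.2 i⟩

theorem finite_range_cylinderAt (k : ℕ) :
    (Set.range fun ω : SigmaA l A => cylinderAt ω k).Finite := by
  refine (Set.finite_range fun v : Fin k → Fin l => cylinder A (List.ofFn v)).subset ?_
  rintro _ ⟨ω, rfl⟩
  exact ⟨fun i => ω.1 i, rfl⟩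

theorem exists_cylinderAt_subset {U : Set (SigmaA l A)} (hU : IsOpen U) {ω : SigmaA l A}
    (hω : ω ∈ U) : ∃ k, cylinderAt ω k ⊆ U := by
  obtain ⟨V, hV, rfl⟩ := isOpen_induced_iff.1 hU
  obtain ⟨I, u, hu, hsub⟩ := isOpen_pi_iff.1 hV ω.1 hω
  refine ⟨I.sup id + 1, fun υ hυ => hsub fun i hi => ?_⟩
  rw [mem_cylinderAt.1 hυ i (Nat.lt_succ_of_le (Finset.le_sup (f := id) hi))]
  exact (hu i hi).2

theorem measure_setOf_wordPrefix_mem (μ : Measure (SigmaA l A)) (k : ℕ) (S : Set (List (Fin l))) :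
    μ {ω | wordPrefix ω k ∈ S} =
      ∑ v : Fin k → Fin l, S.indicator (fun y => μ (cylinder A y)) (List.ofFn v) := by
  classical
  let π : SigmaA l A → Fin k → Fin l := fun ω i => ω.1 i
  have hfiber : ∀ v, π ⁻¹' {v} = cylinder A (List.ofFn v) := fun v => by
    ext ω
    simp [π, cylinder, funext_iff, Fin.forall_iff]
  have hpre : {ω | wordPrefix ω k ∈ S} =
      π ⁻¹' ↑({v | List.ofFn v ∈ S} : Finset (Fin k → Fin l)) := by
    ext ω
    simp [π, wordPrefix]
  simp only [hpre, ← sum_measure_preimage_singleton _ fun v _ =>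
    (hfiber v).symm ▸ measurableSet_cylinder (List.ofFn v), hfiber, Finset.sum_filter,
    Set.indicator_apply]

theorem measure_le_of_isOpen_of_forall_cylinderAt {μ₁ μ₂ : Measure (SigmaA l A)}
    (h : ∀ ω k, μ₂ (cylinderAt ω k) ≤ μ₁ (cylinderAt ω k)) {U : Set (SigmaA l A)}
    (hU : IsOpen U) : μ₂ U ≤ μ₁ U := by
  let V : ℕ → Set (SigmaA l A) := fun k => {ω | cylinderAt ω k ⊆ U}
  have hmono : Monotone V := fun _ _ hab ω hω => (antitone_cylinderAt ω hab).trans hω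
  have hUV : U = ⋃ k, V k := Set.Subset.antisymm
    (fun _ hω => Set.mem_iUnion.2 (exists_cylinderAt_subset hU hω))
    (Set.iUnion_subset fun k ω hω => hω (self_mem_cylinderAt ω k))
  have hcyl : ∀ y, μ₂ (cylinder A y) ≤ μ₁ (cylinder A y) := fun y => by
    rcases (cylinder A y).eq_empty_or_nonempty with hy | ⟨ω, hω⟩
    · simp [hy]
    · exact cylinderAt_length_eq hω ▸ h ω _
  have hV : ∀ k, μ₂ (V k) ≤ μ₁ (V k) := fun k => by
    change μ₂ {ω | wordPrefix ω k ∈ {y | cylinder A y ⊆ U}} ≤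
      μ₁ {ω | wordPrefix ω k ∈ {y | cylinder A y ⊆ U}}
    rw [measure_setOf_wordPrefix_mem, measure_setOf_wordPrefix_mem]
    exact Finset.sum_le_sum fun v _ => Set.indicator_le_indicator (hcyl _)
  rw [hUV, hmono.measure_iUnion, hmono.measure_iUnion]
  exact iSup_mono hV

theorem measure_le_of_forall_cylinderAt {μ₁ μ₂ : Measure (SigmaA l A)} [IsFiniteMeasure μ₁]
    (h : ∀ ω k, μ₂ (cylinderAt ω k) ≤ μ₁ (cylinderAt ω k)) : μ₂ ≤ μ₁ := by
  have : SecondCountableTopology (SigmaA l A) := TopologicalSpace.Subtype.secondCountableTopology _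
  have := TopologicalSpace.metrizableSpace_of_t3_secondCountable (SigmaA l A)
  refine Measure.le_iff.2 fun s _ => ?_
  rw [s.measure_eq_iInf_isOpen μ₁]
  exact le_iInf₂ fun U hsU => le_iInf fun hU =>
    (measure_mono hsU).trans (measure_le_of_isOpen_of_forall_cylinderAt h hU)

end Cylinders

section Gluing

variable {A : Matrix (Fin l) (Fin l) ℕ}

/-- The matrix `A` has `0`-`1` entries and is irreducible. `Matrix.IsIrreducible` is not available
for entries in `ℕ`. -/
def IsIrreducible (A : Matrix (Fin l) (Fin l) ℕ) : Prop :=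
  (∀ i j, A i j = 0 ∨ A i j = 1) ∧ ∀ i j, ∃ n : ℕ, 0 < n ∧ 0 < (A ^ n) i j

/-- Some symbol has two distinct successors. An irreducible matrix without this property is a cyclic
permutation matrix, and its `Σ_A` is a single periodic orbit. -/
def HasBranching (A : Matrix (Fin l) (Fin l) ℕ) : Prop :=
  ∃ b c c', c ≠ c' ∧ A b c = 1 ∧ A b c' = 1

/-- The point `i τ_1 τ_2 …` obtained by prepending an allowed symbol to `τ`. -/
def prepend (i : Fin l) (τ : SigmaA l A) (h : A i (τ.1 0) = 1) : SigmaA l A :=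
  ⟨fun n => n.casesOn i τ.1, fun n => n.casesOn h τ.2⟩

theorem shift_prepend {i : Fin l} {τ : SigmaA l A} (h : A i (τ.1 0) = 1) :
    shift (prepend i τ h) = τ :=
  rfl

theorem exists_iterate_shift_eq (h01 : ∀ i j, A i j = 0 ∨ A i j = 1) {n : ℕ} {i : Fin l}
    {τ : SigmaA l A} (h : 0 < (A ^ n) i (τ.1 0)) :
    ∃ υ : SigmaA l A, υ.1 0 = i ∧ shift^[n] υ = τ := by
  induction n generalizing i with
  | zero =>
    refine ⟨τ, ?_, rfl⟩
    by_contra hne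
    simp [Matrix.one_apply_ne (Ne.symm hne)] at h
  | succ n ih =>
    rw [pow_succ', Matrix.mul_apply] at h
    obtain ⟨j, -, hj⟩ := Finset.exists_ne_zero_of_sum_ne_zero h.ne'
    obtain ⟨υ, rfl, hυ⟩ := ih (Nat.pos_of_ne_zero (right_ne_zero_of_mul hj))
    have hi : A i (υ.1 0) = 1 := (h01 _ _).resolve_left (left_ne_zero_of_mul hj)
    exact ⟨prepend i υ hi, rfl, by rw [Function.iterate_succ_apply, shift_prepend, hυ]⟩

theorem exists_splice {ω τ : SigmaA l A} {k : ℕ} (h : ω.1 k = τ.1 0) :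
    ∃ υ ∈ cylinderAt ω (k + 1), shift^[k] υ = τ := by
  induction k generalizing ω with
  | zero => exact ⟨τ, mem_cylinderAt.2 fun i hi => by rw [Nat.lt_one_iff.1 hi, h], rfl⟩
  | succ k ih =>
    obtain ⟨υ, hυω, hυτ⟩ := ih (ω := shift ω) h
    rw [mem_cylinderAt] at hυω
    have h0 : A (ω.1 0) (υ.1 0) = 1 := by
      rw [hυω 0 k.succ_pos]
      exact ω.2 0
    refine ⟨prepend (ω.1 0) υ h0, mem_cylinderAt.2 ?_, by
      rw [Function.iterate_succ_apply, shift_prepend, hυτ]⟩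
    rintro (_ | i) hi
    · rfl
    · exact hυω i (Nat.lt_of_succ_lt_succ hi)

theorem exists_connecting (hA : IsIrreducible A) :
    ∃ N, ∀ (ω : SigmaA l A) (k : ℕ) (b : Fin l), ∃ n ≤ N, ∀ τ : SigmaA l A, τ.1 0 = b →
      ∃ υ ∈ cylinderAt ω k, shift^[k + n] υ = τ := by
  choose p hp hpos using hA.2
  refine ⟨Finset.univ.sup fun ij : Fin l × Fin l => p ij.1 ij.2, fun ω k b => ?_⟩
  rcases k with _ | k
  · exact ⟨0, Nat.zero_le _, fun τ _ => ⟨τ, by simp [cylinderAt_zero], rfl⟩⟩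
  · refine ⟨p (ω.1 k) b - 1, (Nat.sub_le _ _).trans (Finset.le_sup
      (f := fun ij : Fin l × Fin l => p ij.1 ij.2) (Finset.mem_univ (ω.1 k, b))), ?_⟩
    rintro τ rfl
    obtain ⟨ξ, hξω, hξτ⟩ := exists_iterate_shift_eq hA.1 (hpos (ω.1 k) (τ.1 0))
    obtain ⟨υ, hυω, hυξ⟩ := exists_splice hξω.symm
    refine ⟨υ, hυω, ?_⟩
    rw [show k + 1 + (p (ω.1 k) (τ.1 0) - 1) = p (ω.1 k) (τ.1 0) + k by
      have := hp (ω.1 k) (τ.1 0); omega, Function.iterate_add_apply, hυξ, hξτ]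

theorem exists_coord_zero_eq (hA : IsIrreducible A) [Nonempty (SigmaA l A)] (i : Fin l) :
    ∃ τ : SigmaA l A, τ.1 0 = i := by
  obtain ⟨ω⟩ := ‹Nonempty (SigmaA l A)›
  obtain ⟨n, -, hn⟩ := hA.2 i (ω.1 0)
  obtain ⟨τ, hτ, -⟩ := exists_iterate_shift_eq hA.1 hn
  exact ⟨τ, hτ⟩

theorem exists_mem_cylinderAt_notMem (hA : IsIrreducible A) (hbranch : HasBranching A) :
    ∃ N ≠ 0, ∀ (ω : SigmaA l A) (k : ℕ), ∃ υ ∈ cylinderAt ω k, υ ∉ cylinderAt ω (k + N) := by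
  obtain ⟨b, c, c', hcc', hc, hc'⟩ := hbranch
  obtain ⟨N, hN⟩ := exists_connecting hA
  refine ⟨N + 2, by omega, fun ω k => ?_⟩
  obtain ⟨n, hnN, hn⟩ := hN ω k b
  obtain ⟨d, hd, hbd⟩ : ∃ d, d ≠ ω.1 (k + n + 1) ∧ A b d = 1 := by
    by_cases h : c = ω.1 (k + n + 1)
    · exact ⟨c', h ▸ hcc'.symm, hc'⟩
    · exact ⟨c, h, hc⟩
  have : Nonempty (SigmaA l A) := ⟨ω⟩
  obtain ⟨τ, rfl⟩ := exists_coord_zero_eq hA d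
  obtain ⟨υ, hυω, hυ⟩ := hn (prepend b τ hbd) rfl
  refine ⟨υ, hυω, fun h => hd ?_⟩
  rw [← mem_cylinderAt.1 h (k + n + 1) (by omega), ← shift_prepend hbd, ← hυ,
    ← Function.iterate_succ_apply' shift, iterate_shift_apply, zero_add]

end Gluing

theorem le_mul_exp_of_antitone_of_contraction {a : ℕ → ℝ} (ha : Antitone a) (ha0 : ∀ k, 0 ≤ a k)
    {N : ℕ} {δ : ℝ} (hδ : 0 ≤ δ) (h : ∀ k, a (k + N) ≤ (1 - δ) * a k) (k : ℕ) :
    a k ≤ a 0 * Real.exp (δ - δ / N * k) := by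
  have hstep : ∀ j, a (j * N) ≤ a 0 * Real.exp (-(δ * j)) := by
    intro j
    induction j with
    | zero => simp
    | succ j ih =>
      calc a ((j + 1) * N) = a (j * N + N) := by rw [Nat.succ_mul]
        _ ≤ (1 - δ) * a (j * N) := h _
        _ ≤ Real.exp (-δ) * a (j * N) :=
          mul_le_mul_of_nonneg_right (Real.one_sub_le_exp_neg δ) (ha0 _)
        _ ≤ Real.exp (-δ) * (a 0 * Real.exp (-(δ * j))) := by gcongr
        _ = a 0 * Real.exp (-(δ * (j + 1 : ℕ))) := by
          rw [mul_left_comm, ← Real.exp_add]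
          push_cast
          ring_nf
  have hfloor : (k / N : ℝ) - 1 ≤ (k / N : ℕ) := by
    rw [← Nat.floor_div_eq_div (K := ℝ)]
    exact (Nat.sub_one_lt_floor _).le
  calc a k ≤ a (k / N * N) := ha (Nat.div_mul_le_self k N)
    _ ≤ a 0 * Real.exp (-(δ * (k / N : ℕ))) := hstep _
    _ ≤ a 0 * Real.exp (δ - δ / N * k) := by
      gcongr
      · exact ha0 0
      · have := mul_le_mul_of_nonneg_left hfloor hδ
        rw [mul_sub, mul_one, mul_div_left_comm, mul_comm] at this
        linarith

section QuasiBernoulli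

variable {A : Matrix (Fin l) (Fin l) ℕ} {ν : Measure (SigmaA l A)}

/-- All cylinders have positive measure and the measure of a concatenation of two words dominates
the product of their measures up to a constant. Gibbs measures have this property, and it yields
both ergodicity and the exponential decay of cylinder measures. -/
structure IsLowerQuasiBernoulli (ν : Measure (SigmaA l A)) : Prop where
  pos : ∀ ω k, 0 < ν.real (cylinderAt ω k)
  exists_mul_le : ∃ κ : ℝ, 0 < κ ∧ ∀ ω m n,
    κ * (ν.real (cylinderAt ω m) * ν.real (cylinderAt (shift^[m] ω) n)) ≤
      ν.real (cylinderAt ω (m + n))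

theorem exists_pos_le_measureReal_cylinderAt {n : ℕ} (hν : ∀ ω, 0 < ν.real (cylinderAt ω n)) :
    ∃ δ : ℝ, 0 < δ ∧ ∀ ω, δ ≤ ν.real (cylinderAt ω n) := by
  rcases isEmpty_or_nonempty (SigmaA l A) with _ | _
  · exact ⟨1, one_pos, isEmptyElim⟩
  · obtain ⟨_, ⟨ω, rfl⟩, hmin⟩ := Set.exists_min_image _ ν.real (finite_range_cylinderAt n)
      (Set.range_nonempty fun ω : SigmaA l A => cylinderAt ω n)
    exact ⟨_, hν ω, fun υ => hmin _ ⟨υ, rfl⟩⟩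

namespace IsLowerQuasiBernoulli

variable [IsFiniteMeasure ν]

theorem exists_mul_le_cylinderAt_add (hν : IsLowerQuasiBernoulli ν) (N : ℕ) :
    ∃ δ : ℝ, 0 < δ ∧ ∀ ω k, ∀ n ≤ N,
      δ * ν.real (cylinderAt ω k) ≤ ν.real (cylinderAt ω (k + n)) := by
  obtain ⟨κ, hκ, hmul⟩ := hν.exists_mul_le
  obtain ⟨δ, hδ, hmin⟩ := exists_pos_le_measureReal_cylinderAt fun ω => hν.pos ω N
  refine ⟨κ * δ, mul_pos hκ hδ, fun ω k n hn => ?_⟩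
  calc κ * δ * ν.real (cylinderAt ω k)
      ≤ κ * (ν.real (cylinderAt ω k) * ν.real (cylinderAt (shift^[k] ω) n)) := by
        rw [mul_assoc, mul_comm δ]
        gcongr
        exact (hmin _).trans (measureReal_mono (antitone_cylinderAt _ hn))
    _ ≤ ν.real (cylinderAt ω (k + n)) := hmul ω k n

theorem exists_mul_le_cylinderAt_inter_preimage (hν : IsLowerQuasiBernoulli ν)
    (hA : IsIrreducible A) :
    ∃ N : ℕ, ∃ κ : ℝ, 0 < κ ∧ ∀ ω k τ q, ∃ n ≤ N,
      κ * (ν.real (cylinderAt ω k) * ν.real (cylinderAt τ q)) ≤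
        ν.real (cylinderAt ω k ∩ shift^[k + n] ⁻¹' cylinderAt τ q) := by
  obtain ⟨N, hconn⟩ := exists_connecting hA
  obtain ⟨κ, hκ, hmul⟩ := hν.exists_mul_le
  obtain ⟨δ, hδ, hext⟩ := hν.exists_mul_le_cylinderAt_add N
  refine ⟨N, κ * δ, mul_pos hκ hδ, fun ω k τ q => ?_⟩
  obtain ⟨n, hn, hglue⟩ := hconn ω k (τ.1 0)
  obtain ⟨υ, hυω, hυτ⟩ := hglue τ rfl
  refine ⟨n, hn, ?_⟩
  rw [← cylinderAt_eq_of_mem hυω, ← hυτ]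
  calc κ * δ * (ν.real (cylinderAt υ k) * ν.real (cylinderAt (shift^[k + n] υ) q))
      = κ * (δ * ν.real (cylinderAt υ k) * ν.real (cylinderAt (shift^[k + n] υ) q)) := by ring
    _ ≤ κ * (ν.real (cylinderAt υ (k + n)) * ν.real (cylinderAt (shift^[k + n] υ) q)) := by
        gcongr
        exact hext υ k n hn
    _ ≤ ν.real (cylinderAt υ (k + n + q)) := hmul υ (k + n) q
    _ ≤ ν.real (cylinderAt υ k ∩ shift^[k + n] ⁻¹' cylinderAt (shift^[k + n] υ) q) := by
        rw [cylinderAt_add]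
        exact measureReal_mono
          (Set.inter_subset_inter_left _ (antitone_cylinderAt υ (Nat.le_add_right k n)))

theorem exists_mul_measure_le_sum_inter_preimage (hν : IsLowerQuasiBernoulli ν)
    (hA : IsIrreducible A) :
    ∃ N : ℕ, ∃ κ : ℝ≥0∞, κ ≠ 0 ∧ ∀ ω k B, MeasurableSet B →
      κ * ν (cylinderAt ω k) * ν B ≤
        ∑ n ∈ Finset.range (N + 1), ν (cylinderAt ω k ∩ shift^[k + n] ⁻¹' B) := by
  obtain ⟨N, κ, hκ, hmix⟩ := hν.exists_mul_le_cylinderAt_inter_preimage hA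
  refine ⟨N, ENNReal.ofReal κ, by simpa using hκ, fun ω k B hB => ?_⟩
  have happly : ∀ B, MeasurableSet B → (∑ n ∈ Finset.range (N + 1),
      (ν.restrict (cylinderAt ω k)).map shift^[k + n]) B =
      ∑ n ∈ Finset.range (N + 1), ν (cylinderAt ω k ∩ shift^[k + n] ⁻¹' B) := fun B hB => by
    rw [Measure.finsetSum_apply]
    refine Finset.sum_congr rfl fun n _ => ?_
    have hmeas : Measurable (shift^[k + n] : SigmaA l A → SigmaA l A) :=
      continuous_shift.measurable.iterate _
    rw [Measure.map_apply hmeas hB, Measure.restrict_apply (hmeas hB), Set.inter_comm]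
  have hdom : (ENNReal.ofReal κ * ν (cylinderAt ω k)) • ν ≤
      ∑ n ∈ Finset.range (N + 1), (ν.restrict (cylinderAt ω k)).map shift^[k + n] := by
    refine measure_le_of_forall_cylinderAt fun τ q => ?_
    obtain ⟨n, hn, hle⟩ := hmix ω k τ q
    rw [happly _ (measurableSet_cylinderAt τ q), Measure.smul_apply, smul_eq_mul, mul_assoc]
    refine le_trans ?_ (Finset.single_le_sum
      (f := fun n => ν (cylinderAt ω k ∩ shift^[k + n] ⁻¹' cylinderAt τ q))
      (fun _ _ => zero_le) (Finset.mem_range_succ_iff.2 hn))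
    rw [← ofReal_measureReal (s := cylinderAt ω k), ← ofReal_measureReal (s := cylinderAt τ q),
      ← ofReal_measureReal (s := _ ∩ _), ← ENNReal.ofReal_mul measureReal_nonneg,
      ← ENNReal.ofReal_mul hκ.le]
    exact ENNReal.ofReal_le_ofReal hle
  have := hdom B
  rwa [happly B hB] at this

theorem ergodic (hν : IsLowerQuasiBernoulli ν) (hA : IsIrreducible A)
    (hinv : MeasurePreserving shift ν ν) : Ergodic shift ν := by
  refine ⟨hinv, ⟨fun B hB hBinv => ?_⟩⟩
  obtain ⟨N, κ, hκ, hmix⟩ := hν.exists_mul_measure_le_sum_inter_preimage hA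
  have hiter : ∀ n, shift^[n] ⁻¹' B = B := fun n => by
    rw [Set.preimage_iterate_eq, Function.iterate_fixed hBinv]
  have hdom : (κ * ν B) • ν ≤ ∑ _n ∈ Finset.range (N + 1), ν.restrict B := by
    refine measure_le_of_forall_cylinderAt fun ω k => ?_
    have := hmix ω k B hB
    simp only [hiter] at this
    simpa only [Measure.smul_apply, smul_eq_mul, Measure.finsetSum_apply, mul_right_comm κ (ν B),
      Measure.restrict_apply (measurableSet_cylinderAt ω k)] using this
  have hcompl : κ * ν B * ν Bᶜ ≤ 0 := by
    simpa only [Measure.smul_apply, smul_eq_mul, Measure.finsetSum_apply,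
      Measure.restrict_apply hB.compl, Set.compl_inter_self, measure_empty,
      Finset.sum_const_zero] using hdom Bᶜ
  rw [nonpos_iff_eq_zero, mul_eq_zero, mul_eq_zero, or_iff_right hκ] at hcompl
  rw [Filter.eventuallyConst_set]
  exact hcompl.symm.imp (fun h => by simpa [mem_ae_iff] using h) measure_eq_zero_iff_ae_notMem.1

theorem exists_cylinderAt_add_le (hν : IsLowerQuasiBernoulli ν) (hA : IsIrreducible A)
    (hbranch : HasBranching A) :
    ∃ N ≠ 0, ∃ δ : ℝ, 0 < δ ∧ ∀ ω k,
      ν.real (cylinderAt ω (k + N)) ≤ (1 - δ) * ν.real (cylinderAt ω k) := by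
  obtain ⟨N, hN, hsep⟩ := exists_mem_cylinderAt_notMem hA hbranch
  obtain ⟨δ, hδ, hext⟩ := hν.exists_mul_le_cylinderAt_add N
  refine ⟨N, hN, δ, hδ, fun ω k => ?_⟩
  obtain ⟨υ, hυω, hυ⟩ := hsep ω k
  have hdisj : Disjoint (cylinderAt ω (k + N)) (cylinderAt υ (k + N)) :=
    Set.disjoint_left.2 fun ξ hξω hξυ => hυ <| by
      rw [← cylinderAt_eq_of_mem hξω, cylinderAt_eq_of_mem hξυ]
      exact self_mem_cylinderAt υ _
  have hsub : cylinderAt ω (k + N) ∪ cylinderAt υ (k + N) ⊆ cylinderAt ω k :=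
    Set.union_subset (antitone_cylinderAt ω (Nat.le_add_right k N))
      (cylinderAt_eq_of_mem hυω ▸ antitone_cylinderAt υ (Nat.le_add_right k N))
  have hadd := measureReal_mono (μ := ν) hsub
  rw [measureReal_union hdisj (measurableSet_cylinderAt _ _)] at hadd
  have hge := hext υ k N le_rfl
  rw [cylinderAt_eq_of_mem hυω] at hge
  linarith

theorem exists_cylinderAt_le_exp (hν : IsLowerQuasiBernoulli ν) (hA : IsIrreducible A)
    (hbranch : HasBranching A) :
    ∃ θ E : ℝ, 0 < θ ∧ ∀ ω k, ν.real (cylinderAt ω k) ≤ Real.exp (E - θ * k) := by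
  obtain ⟨N, hN, δ, hδ, hcontr⟩ := hν.exists_cylinderAt_add_le hA hbranch
  refine ⟨δ / N, ν.real Set.univ + δ, by positivity, fun ω k => ?_⟩
  calc ν.real (cylinderAt ω k)
      ≤ ν.real (cylinderAt ω 0) * Real.exp (δ - δ / N * k) :=
        le_mul_exp_of_antitone_of_contraction
          (fun _ _ hab => measureReal_mono (antitone_cylinderAt ω hab))
          (fun _ => measureReal_nonneg) hδ.le (hcontr ω) k
    _ ≤ Real.exp (ν.real Set.univ) * Real.exp (δ - δ / N * k) := by
        rw [cylinderAt_zero]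
        gcongr
        linarith [Real.add_one_le_exp (ν.real Set.univ)]
    _ = Real.exp (ν.real Set.univ + δ - δ / N * k) := by rw [← Real.exp_add, add_sub_assoc]

end IsLowerQuasiBernoulli

end QuasiBernoulli

section Gibbs

variable {A : Matrix (Fin l) (Fin l) ℕ} {ν : Measure (SigmaA l A)} {φ : SigmaA l A → ℝ} {P : ℝ}

/-- The information function `-log ν([ω_1, …, ω_k])`. It takes the junk value `0` on null
cylinders. -/
noncomputable def information (ν : Measure (SigmaA l A)) (k : ℕ) (ω : SigmaA l A) : ℝ :=
  -Real.log (ν.real (cylinderAt ω k))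

theorem exp_neg_information {ω : SigmaA l A} {k : ℕ} (h : 0 < ν.real (cylinderAt ω k)) :
    Real.exp (-information ν k ω) = ν.real (cylinderAt ω k) := by
  rw [information, neg_neg, Real.exp_log h]

theorem le_of_tendstoInMeasure_information [IsProbabilityMeasure ν] {h θ E : ℝ}
    (hpos : ∀ ω k, 0 < ν.real (cylinderAt ω k))
    (hlim : TendstoInMeasure ν (fun k ω => information ν k ω / k) atTop fun _ => h)
    (hdecay : ∀ ω k, ν.real (cylinderAt ω k) ≤ Real.exp (E - θ * k)) : θ ≤ h := by
  obtain ⟨ns, hns, hae⟩ := hlim.exists_seq_tendsto_ae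
  obtain ⟨ω, hω⟩ := hae.exists
  have hinfo : ∀ k : ℕ, k ≠ 0 → θ - E / k ≤ information ν k ω / k := fun k hk => by
    have h1 : information ν k ω ≥ θ * k - E := by
      have := (Real.log_le_iff_le_exp (hpos ω k)).2 (hdecay ω k)
      rw [information]
      linarith
    have hk0 : (0 : ℝ) < k := by positivity
    rw [le_div_iff₀ hk0, sub_mul, div_mul_cancel₀ _ hk0.ne']
    exact h1
  have hlower : Tendsto (fun i => θ - E / ns i) atTop (nhds (θ - 0)) :=
    tendsto_const_nhds.sub
      ((tendsto_const_div_atTop_nhds_zero_nat E).comp hns.tendsto_atTop)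
  rw [sub_zero] at hlower
  exact le_of_tendsto_of_tendsto hlower hω
    ((hns.tendsto_atTop.eventually_ne_atTop 0).mono fun i hi => hinfo (ns i) hi)

namespace IsGibbs

variable [IsProbabilityMeasure ν]

theorem measureReal_cylinderAt_pos (hν : IsGibbs φ P ν) (ω : SigmaA l A) (k : ℕ) :
    0 < ν.real (cylinderAt ω k) := by
  rcases Nat.eq_zero_or_pos k with rfl | hk
  · simp [cylinderAt_zero]
  · obtain ⟨c, hc, hν⟩ := hν
    have := (inv_pos.2 (one_pos.trans hc)).trans_le (hν ω k hk).1
    exact (div_pos_iff_of_pos_right (Real.exp_pos _)).1 this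

theorem exists_abs_information_sub_le (hν : IsGibbs φ P ν) :
    ∃ D, ∀ ω k, |information ν k ω - (k * P - birkhoff φ k ω)| ≤ D := by
  have hpos := hν.measureReal_cylinderAt_pos
  obtain ⟨c, hc, hν⟩ := hν
  refine ⟨Real.log c, fun ω k => ?_⟩
  rcases Nat.eq_zero_or_pos k with rfl | hk
  · simp [information, cylinderAt_zero, birkhoff, Real.log_nonneg hc.le]
  · have hquot : Real.log (ν.real (cylinderAt ω k) / Real.exp (birkhoff φ k ω - k * P)) =
        -(information ν k ω - (k * P - birkhoff φ k ω)) := by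
      rw [Real.log_div (hpos ω k).ne' (Real.exp_ne_zero _), Real.log_exp, information]
      ring
    have hc0 : 0 < c := one_pos.trans hc
    rw [← abs_neg, ← hquot, abs_le, ← Real.log_inv]
    exact ⟨Real.log_le_log (inv_pos.2 hc0) (hν ω k hk).1,
      Real.log_le_log (div_pos (hpos ω k) (Real.exp_pos _)) (hν ω k hk).2⟩

theorem isLowerQuasiBernoulli (hν : IsGibbs φ P ν) : IsLowerQuasiBernoulli ν := by
  have hpos := hν.measureReal_cylinderAt_pos
  obtain ⟨D, hD⟩ := hν.exists_abs_information_sub_le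
  refine ⟨hpos, Real.exp (-(3 * D)), Real.exp_pos _, fun ω m n => ?_⟩
  have hsub : information ν (m + n) ω ≤
      information ν m ω + information ν n (shift^[m] ω) + 3 * D := by
    have hadd : birkhoff φ (m + n) ω = birkhoff φ m ω + birkhoff φ n (shift^[m] ω) :=
      birkhoffSum_add shift φ m n ω
    have h₁ := (abs_le.1 (hD ω m)).1
    have h₂ := (abs_le.1 (hD (shift^[m] ω) n)).1
    have h₃ := (abs_le.1 (hD ω (m + n))).2
    push_cast at h₃
    linarith
  rw [← exp_neg_information (hpos ω m), ← exp_neg_information (hpos _ n),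
    ← exp_neg_information (hpos ω (m + n)), ← Real.exp_add, ← Real.exp_add, Real.exp_le_exp]
  linarith

theorem exists_abs_le (hν : IsGibbs φ P ν) : ∃ M, ∀ ω, |φ ω| ≤ M := by
  have hpos := hν.measureReal_cylinderAt_pos
  obtain ⟨D, hD⟩ := hν.exists_abs_information_sub_le
  obtain ⟨δ, hδ, hmin⟩ := exists_pos_le_measureReal_cylinderAt (hpos · 1)
  refine ⟨D + |P| - Real.log δ, fun ω => ?_⟩
  have hdev := abs_le.1 (hD ω 1)
  have hinfo : 0 ≤ information ν 1 ω ∧ information ν 1 ω ≤ -Real.log δ :=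
    ⟨neg_nonneg.2 (Real.log_nonpos measureReal_nonneg measureReal_le_one),
      neg_le_neg (Real.log_le_log hδ (hmin ω))⟩
  have hP := abs_le.1 (le_refl |P|)
  simp only [birkhoff, Finset.sum_range_one, Function.iterate_zero, id, Nat.cast_one,
    one_mul] at hdev
  rw [abs_le]
  constructor <;> linarith

theorem memLp (hν : IsGibbs φ P ν) (hφ : AEStronglyMeasurable φ ν) (p : ℝ≥0∞) : MemLp φ p ν := by
  obtain ⟨M, hM⟩ := hν.exists_abs_le
  exact MemLp.of_bound hφ M (Eventually.of_forall hM)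

theorem tendstoInMeasure_information_div (hν : IsGibbs φ P ν) (hφ : AEStronglyMeasurable φ ν)
    (herg : Ergodic shift ν) :
    TendstoInMeasure ν (fun k ω => information ν k ω / k) atTop fun _ => P - ∫ ω, φ ω ∂ν := by
  obtain ⟨D, hD⟩ := hν.exists_abs_information_sub_le
  have havg := tendstoInMeasure_iff_dist.1
    (tendstoInMeasure_birkhoffAverage herg (hν.memLp hφ 2))
  refine tendstoInMeasure_iff_dist.2 fun ε hε => ?_
  refine tendsto_of_tendsto_of_tendsto_of_le_of_le' tendsto_const_nhds (havg (ε / 2) (half_pos hε))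
    (Eventually.of_forall fun _ => zero_le) ?_
  filter_upwards [(tendsto_const_div_atTop_nhds_zero_nat D).eventually_lt_const (half_pos hε),
    eventually_ne_atTop 0] with k hk hk0
  refine measure_mono fun ω hω => ?_
  have hk0' : (0 : ℝ) < k := by positivity
  have hdist : |information ν k ω / k - (P - birkhoffAverage ℝ shift φ k ω)| ≤ D / k := by
    have hscale : information ν k ω / k - (P - birkhoffAverage ℝ shift φ k ω) =
        (information ν k ω - (k * P - birkhoff φ k ω)) / k := by
      rw [show birkhoffAverage ℝ shift φ k ω = birkhoff φ k ω / k from inv_mul_eq_div _ _]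
      field_simp
    rw [hscale, abs_div, Nat.abs_cast]
    exact div_le_div_of_nonneg_right (hD ω k) hk0'.le
  simp only [Set.mem_ofPred_eq, Real.dist_eq] at hω ⊢
  have := abs_sub_le (information ν k ω / k) (P - birkhoffAverage ℝ shift φ k ω)
    (P - ∫ ω, φ ω ∂ν)
  rw [sub_sub_sub_cancel_left, abs_sub_comm (∫ ω, φ ω ∂ν)] at this
  linarith

end IsGibbs

end Gibbs

section Counting

variable {A : Matrix (Fin l) (Fin l) ℕ} {ν : Measure (SigmaA l A)}

theorem tsum_indicator_measure_cylinder (ν : Measure (SigmaA l A)) (S : Set (List (Fin l))) :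
    ∑' y, S.indicator (fun y => ν (cylinder A y)) y = ∑' k, ν {ω | wordPrefix ω k ∈ S} := by
  rw [← List.equivSigmaTuple.symm.tsum_eq, ENNReal.tsum_sigma']
  refine tsum_congr fun k => ?_
  rw [tsum_fintype, measure_setOf_wordPrefix_mem]
  rfl

theorem tsum_indicator_measureReal_cylinder [IsFiniteMeasure ν] (S : Set (List (Fin l))) :
    ∑' y, S.indicator (fun y => ν.real (cylinder A y)) y =
      ∑' k, ν.real {ω | wordPrefix ω k ∈ S} := by
  have hreal : ∀ y, S.indicator (fun y => ν.real (cylinder A y)) y =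
      (S.indicator (fun y => ν (cylinder A y)) y).toReal := fun y => by
    by_cases hy : y ∈ S <;> simp [hy, measureReal_def]
  have hfin : ∀ y, S.indicator (fun y => ν (cylinder A y)) y ≠ ∞ := fun y =>
    ne_top_of_le_ne_top (measure_ne_top ν (cylinder A y)) (Set.indicator_le_self' (by simp) y)
  rw [tsum_congr hreal, ← ENNReal.tsum_toReal_eq hfin, tsum_indicator_measure_cylinder,
    ENNReal.tsum_toReal_eq fun _ => measure_ne_top _ _]
  rfl

theorem xiSum_eq_tsum [IsFiniteMeasure ν] (x : List (Fin l)) (t : ℝ) :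
    xiSum A ν x t = ∑' k, ν.real {ω | Admissible A (wordPrefix ω k) ∧
      cylinderAt ω k ⊆ cylinder A x ∧ t < ν.real (cylinderAt ω k)} :=
  tsum_indicator_measureReal_cylinder _

theorem xiSum_eq_sum [IsFiniteMeasure ν] (x : List (Fin l)) {t : ℝ} {N : ℕ}
    (hN : ∀ (ω : SigmaA l A) (k : ℕ), N ≤ k → ν.real (cylinderAt ω k) ≤ t) :
    xiSum A ν x t = ∑ k ∈ Finset.range N, ν.real {ω | Admissible A (wordPrefix ω k) ∧
      cylinderAt ω k ⊆ cylinder A x ∧ t < ν.real (cylinderAt ω k)} := by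
  rw [xiSum_eq_tsum, tsum_eq_sum]
  intro k hk
  rw [Finset.mem_range, not_lt] at hk
  have hempty : {ω : SigmaA l A | Admissible A (wordPrefix ω k) ∧
      cylinderAt ω k ⊆ cylinder A x ∧ t < ν.real (cylinderAt ω k)} = ∅ :=
    Set.eq_empty_of_forall_notMem fun ω hω => (hN ω k hk).not_gt hω.2.2
  rw [hempty, measureReal_empty]

/-- The mass of the points of `[x]` whose cylinder of length `k` has measure exceeding `t`. Up to
finitely many short words, `Ξ_x(t)` is the sum of these masses over all `k`. -/
noncomputable def heavyMeasure (ν : Measure (SigmaA l A)) (x : List (Fin l)) (t : ℝ) (k : ℕ) : ℝ :=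
  ν.real {ω | ω ∈ cylinder A x ∧ t < ν.real (cylinderAt ω k)}

theorem heavyMeasure_nonneg (x : List (Fin l)) (t : ℝ) (k : ℕ) : 0 ≤ heavyMeasure ν x t k :=
  measureReal_nonneg

variable [IsFiniteMeasure ν]

theorem heavyMeasure_le (x : List (Fin l)) (t : ℝ) (k : ℕ) :
    heavyMeasure ν x t k ≤ ν.real (cylinder A x) :=
  measureReal_mono fun _ h => h.1

theorem antitone_heavyMeasure (x : List (Fin l)) (t : ℝ) : Antitone (heavyMeasure ν x t) :=
  fun _ _ hab => measureReal_mono fun ω h =>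
    ⟨h.1, h.2.trans_le (measureReal_mono (antitone_cylinderAt ω hab))⟩

theorem xiSum_le (x : List (Fin l)) {t : ℝ} {N : ℕ}
    (hN : ∀ (ω : SigmaA l A) (k : ℕ), N ≤ k → ν.real (cylinderAt ω k) ≤ t) (b : ℕ) :
    xiSum A ν x t ≤ b * ν.real (cylinder A x) + N * heavyMeasure ν x t b := by
  rw [xiSum_eq_sum x hN]
  calc _ ≤ ∑ k ∈ Finset.range N, heavyMeasure ν x t k :=
        Finset.sum_le_sum fun k _ => measureReal_mono fun ω h =>
          ⟨h.2.1 (self_mem_cylinderAt ω k), h.2.2⟩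
    _ ≤ ∑ k ∈ Finset.range (b + N), heavyMeasure ν x t k :=
        Finset.sum_le_sum_of_subset_of_nonneg (Finset.range_mono (by omega))
          fun k _ _ => heavyMeasure_nonneg x t k
    _ = ∑ k ∈ Finset.range b, heavyMeasure ν x t k +
          ∑ k ∈ Finset.range N, heavyMeasure ν x t (b + k) := Finset.sum_range_add _ _ _
    _ ≤ ∑ _k ∈ Finset.range b, ν.real (cylinder A x) +
          ∑ _k ∈ Finset.range N, heavyMeasure ν x t b :=
        add_le_add (Finset.sum_le_sum fun k _ => heavyMeasure_le x t k)
          (Finset.sum_le_sum fun k _ => antitone_heavyMeasure x t (by omega))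
    _ = _ := by simp

theorem le_xiSum (x : List (Fin l)) {t : ℝ} {N : ℕ}
    (hN : ∀ (ω : SigmaA l A) (k : ℕ), N ≤ k → ν.real (cylinderAt ω k) ≤ t) (a : ℕ) :
    ((a : ℝ) - (x.length + 1)) * heavyMeasure ν x t a ≤ xiSum A ν x t := by
  rw [xiSum_eq_sum x fun ω k (hk : a + N ≤ k) => hN ω k (by omega)]
  calc _ ≤ ((a - (x.length + 1) : ℕ) : ℝ) * heavyMeasure ν x t a := by
        refine mul_le_mul_of_nonneg_right ?_ (heavyMeasure_nonneg x t a)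
        rw [sub_le_iff_le_add]
        exact_mod_cast (by omega : a ≤ a - (x.length + 1) + (x.length + 1))
    _ = ∑ _k ∈ Finset.Ico (x.length + 1) a, heavyMeasure ν x t a := by simp
    _ ≤ ∑ k ∈ Finset.Ico (x.length + 1) a, ν.real {ω | Admissible A (wordPrefix ω k) ∧
          cylinderAt ω k ⊆ cylinder A x ∧ t < ν.real (cylinderAt ω k)} := by
        refine Finset.sum_le_sum fun k hk => ?_
        rw [Finset.mem_Ico] at hk
        exact (antitone_heavyMeasure x t hk.2.le).trans (measureReal_mono fun ω h =>
          ⟨admissible_wordPrefix ω (by omega), cylinderAt_subset_cylinder (by omega) h.1, h.2⟩)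
    _ ≤ _ :=
        Finset.sum_le_sum_of_subset_of_nonneg
          (fun k hk => Finset.mem_range.2 ((Finset.mem_Ico.1 hk).2.trans_le (by omega)))
          fun k _ _ => measureReal_nonneg

end Counting

section ConstantLimitsInMeasure

variable {α ι : Type*} [MeasurableSpace α] {μ : Measure α} {L : Filter ι}

theorem tendstoInMeasure_mul_of_tendsto_const {E : Type*} [SeminormedRing E] {f : ι → α → E}
    {c : ι → E} {a b : E} (hf : TendstoInMeasure μ f L fun _ => a) (hc : Tendsto c L (nhds b)) :
    TendstoInMeasure μ (fun i ω => f i ω * c i) L fun _ => a * b := by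
  refine tendstoInMeasure_iff_dist.2 fun ε hε => ?_
  obtain ⟨δ, hδ, hmul⟩ :=
    Metric.continuousAt_iff.1 (continuous_mul.continuousAt (x := (a, b))) ε hε
  refine tendsto_of_tendsto_of_tendsto_of_le_of_le' tendsto_const_nhds
    (tendstoInMeasure_iff_dist.1 hf δ hδ) (Eventually.of_forall fun _ => zero_le) ?_
  filter_upwards [Metric.tendsto_nhds.1 hc δ hδ] with i hi
  refine measure_mono fun ω (hω : ε ≤ dist (f i ω * c i) (a * b)) => ?_
  by_contra hlt
  exact hω.not_gt (@hmul (f i ω, c i) (max_lt (not_le.1 hlt) hi))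

variable [IsFiniteMeasure μ] {f : ι → α → ℝ} {a c : ℝ}

theorem tendsto_measureReal_inter_setOf_lt_of_lt (hf : TendstoInMeasure μ f L fun _ => a)
    (hac : a < c) (s : Set α) :
    Tendsto (fun i => μ.real (s ∩ {ω | f i ω < c})) L (nhds (μ.real s)) := by
  have hdev := tendstoInMeasure_iff_measureReal_dist.1 hf (c - a) (sub_pos.2 hac)
  have hlower : Tendsto (fun i => μ.real s - μ.real {ω | c - a ≤ dist (f i ω) a}) L
      (nhds (μ.real s)) := by
    simpa only [sub_zero] using tendsto_const_nhds.sub hdev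
  refine tendsto_of_tendsto_of_tendsto_of_le_of_le hlower tendsto_const_nhds (fun i => ?_)
    fun i => measureReal_mono Set.inter_subset_left
  refine sub_le_iff_le_add.2 ((measureReal_mono fun ω hω => ?_).trans (measureReal_union_le _ _))
  rcases lt_or_ge (f i ω) c with hlt | hle
  · exact Or.inl ⟨hω, hlt⟩
  · exact Or.inr ((sub_le_sub_right hle a).trans (le_abs_self _))

theorem tendsto_measureReal_inter_setOf_lt_of_gt (hf : TendstoInMeasure μ f L fun _ => a)
    (hac : c < a) (s : Set α) :
    Tendsto (fun i => μ.real (s ∩ {ω | f i ω < c})) L (nhds 0) := by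
  refine squeeze_zero (fun _ => measureReal_nonneg) (fun i => measureReal_mono fun ω hω => ?_)
    (tendstoInMeasure_iff_measureReal_dist.1 hf (a - c) (sub_pos.2 hac))
  have hlt : f i ω < c := hω.2
  exact (sub_le_sub_left hlt.le a).trans ((le_abs_self _).trans_eq (abs_sub_comm _ _))

end ConstantLimitsInMeasure

section Asymptotics

variable {A : Matrix (Fin l) (Fin l) ℕ} {ν : Measure (SigmaA l A)} {u h θ E b : ℝ}

theorem heavyMeasure_exp_neg (hpos : ∀ (ω : SigmaA l A) k, 0 < ν.real (cylinderAt ω k))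
    (x : List (Fin l)) {r : ℝ} (hr : 0 < r) (k : ℕ) :
    heavyMeasure ν x (Real.exp (-r)) k =
      ν.real (cylinder A x ∩ {ω | information ν k ω / r < 1}) := by
  refine congrArg ν.real (Set.ext fun ω => and_congr_right fun _ => ?_)
  rw [← exp_neg_information (hpos ω k), Real.exp_lt_exp, neg_lt_neg_iff, Set.mem_ofPred_eq,
    div_lt_one hr]

theorem tendsto_natCeil_mul_atTop (hu : 0 < u) : Tendsto (fun r : ℝ => ⌈u * r⌉₊) atTop atTop :=
  tendsto_nat_ceil_atTop.comp (tendsto_id.const_mul_atTop hu)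

theorem tendstoInMeasure_information_natCeil_div (hu : 0 < u)
    (hlim : TendstoInMeasure ν (fun k ω => information ν k ω / k) atTop fun _ => h) :
    TendstoInMeasure ν (fun (r : ℝ) ω => information ν ⌈u * r⌉₊ ω / r) atTop fun _ => h * u := by
  refine (tendstoInMeasure_mul_of_tendsto_const (hlim.comp (tendsto_natCeil_mul_atTop hu))
    (tendsto_nat_ceil_mul_div_atTop hu.le)).congr' ?_ EventuallyEq.rfl
  filter_upwards [(tendsto_natCeil_mul_atTop hu).eventually_ne_atTop 0] with r hr
  have : (⌈u * r⌉₊ : ℝ) ≠ 0 := Nat.cast_ne_zero.2 hr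
  exact Eventually.of_forall fun ω => div_mul_div_cancel₀ this

theorem eventually_measureReal_cylinderAt_le_exp_neg (hθ : 0 < θ)
    (hdecay : ∀ (ω : SigmaA l A) k, ν.real (cylinderAt ω k) ≤ Real.exp (E - θ * k)) :
    ∀ᶠ r : ℝ in atTop, ∀ (ω : SigmaA l A) k, ⌈2 / θ * r⌉₊ ≤ k →
      ν.real (cylinderAt ω k) ≤ Real.exp (-r) := by
  filter_upwards [eventually_ge_atTop E] with r hr ω k hk
  refine (hdecay ω k).trans (Real.exp_le_exp.2 ?_)
  have hlen : θ * (2 / θ * r) ≤ θ * k := mul_le_mul_of_nonneg_left (Nat.ceil_le.1 hk) hθ.le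
  rw [← mul_assoc, mul_div_cancel₀ _ hθ.ne'] at hlen
  linarith

variable [IsFiniteMeasure ν]

theorem eventually_lt_xiSum_div (hθ : 0 < θ) (hu : 0 < u) (huh : h * u < 1)
    (hpos : ∀ (ω : SigmaA l A) k, 0 < ν.real (cylinderAt ω k))
    (hdecay : ∀ (ω : SigmaA l A) k, ν.real (cylinderAt ω k) ≤ Real.exp (E - θ * k))
    (hlim : TendstoInMeasure ν (fun k ω => information ν k ω / k) atTop fun _ => h)
    {x : List (Fin l)} (hb : b < u * ν.real (cylinder A x)) :
    ∀ᶠ r : ℝ in atTop, b < xiSum A ν x (Real.exp (-r)) / r := by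
  have hlower : Tendsto (fun r : ℝ => ((⌈u * r⌉₊ : ℝ) / r - (x.length + 1) / r) *
      ν.real (cylinder A x ∩ {ω | information ν ⌈u * r⌉₊ ω / r < 1})) atTop
      (nhds ((u - 0) * ν.real (cylinder A x))) :=
    ((tendsto_nat_ceil_mul_div_atTop hu.le).sub (tendsto_const_nhds.div_atTop tendsto_id)).mul
      (tendsto_measureReal_inter_setOf_lt_of_lt
        (tendstoInMeasure_information_natCeil_div hu hlim) huh _)
  rw [sub_zero] at hlower
  filter_upwards [hlower.eventually_const_lt hb, eventually_gt_atTop 0,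
    eventually_measureReal_cylinderAt_le_exp_neg hθ hdecay] with r hbr hr hN
  refine hbr.trans_le ?_
  rw [← heavyMeasure_exp_neg hpos x hr, ← sub_div, div_mul_eq_mul_div]
  exact div_le_div_of_nonneg_right (le_xiSum x hN _) hr.le

theorem eventually_xiSum_div_lt (hθ : 0 < θ) (hu : 0 < u) (huh : 1 < h * u)
    (hpos : ∀ (ω : SigmaA l A) k, 0 < ν.real (cylinderAt ω k))
    (hdecay : ∀ (ω : SigmaA l A) k, ν.real (cylinderAt ω k) ≤ Real.exp (E - θ * k))
    (hlim : TendstoInMeasure ν (fun k ω => information ν k ω / k) atTop fun _ => h)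
    {x : List (Fin l)} (hb : u * ν.real (cylinder A x) < b) :
    ∀ᶠ r : ℝ in atTop, xiSum A ν x (Real.exp (-r)) / r < b := by
  have hupper : Tendsto (fun r : ℝ => (⌈u * r⌉₊ : ℝ) / r * ν.real (cylinder A x) +
      (⌈2 / θ * r⌉₊ : ℝ) / r * ν.real (cylinder A x ∩ {ω | information ν ⌈u * r⌉₊ ω / r < 1}))
      atTop (nhds (u * ν.real (cylinder A x) + 2 / θ * 0)) :=
    ((tendsto_nat_ceil_mul_div_atTop hu.le).mul_const _).add
      ((tendsto_nat_ceil_mul_div_atTop (by positivity)).mul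
        (tendsto_measureReal_inter_setOf_lt_of_gt
          (tendstoInMeasure_information_natCeil_div hu hlim) huh _))
  rw [mul_zero, add_zero] at hupper
  filter_upwards [hupper.eventually_lt_const hb, eventually_gt_atTop 0,
    eventually_measureReal_cylinderAt_le_exp_neg hθ hdecay] with r hbr hr hN
  refine lt_of_le_of_lt ?_ hbr
  rw [← heavyMeasure_exp_neg hpos x hr, div_mul_eq_mul_div, div_mul_eq_mul_div, ← add_div]
  exact div_le_div_of_nonneg_right (xiSum_le x hN _) hr.le

theorem tendsto_xiSum_div (hh : 0 < h) (hθ : 0 < θ)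
    (hpos : ∀ (ω : SigmaA l A) k, 0 < ν.real (cylinderAt ω k))
    (hdecay : ∀ (ω : SigmaA l A) k, ν.real (cylinderAt ω k) ≤ Real.exp (E - θ * k))
    (hlim : TendstoInMeasure ν (fun k ω => information ν k ω / k) atTop fun _ => h)
    (x : List (Fin l)) :
    Tendsto (fun r : ℝ => xiSum A ν x (Real.exp (-r)) / r) atTop
      (nhds (ν.real (cylinder A x) / h)) := by
  have hinv : 0 < h⁻¹ := inv_pos.2 hh
  have hcont : Tendsto (fun u : ℝ => u * ν.real (cylinder A x)) (nhds h⁻¹)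
      (nhds (ν.real (cylinder A x) / h)) := by
    rw [div_eq_inv_mul]
    exact tendsto_id.mul_const _
  refine tendsto_order.2 ⟨fun b hb => ?_, fun b hb => ?_⟩
  · have hnear : ∀ᶠ u in nhdsWithin h⁻¹ (Set.Iio h⁻¹), b < u * ν.real (cylinder A x) ∧ 0 < u :=
      ((hcont.eventually_const_lt hb).and (lt_mem_nhds hinv)).filter_mono nhdsWithin_le_nhds
    obtain ⟨u, ⟨hbu, hu⟩, huh⟩ := (hnear.and self_mem_nhdsWithin).exists
    exact eventually_lt_xiSum_div hθ hu ((lt_inv_mul_iff₀ hh).1 (by simpa using huh)) hpos hdecay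
      hlim hbu
  · have hnear : ∀ᶠ u in nhdsWithin h⁻¹ (Set.Ioi h⁻¹), u * ν.real (cylinder A x) < b :=
      (hcont.eventually_lt_const hb).filter_mono nhdsWithin_le_nhds
    obtain ⟨u, hub, huh⟩ := (hnear.and self_mem_nhdsWithin).exists
    exact eventually_xiSum_div_lt hθ (hinv.trans huh) ((inv_mul_lt_iff₀ hh).1 (by simpa using huh))
      hpos hdecay hlim hub

end Asymptotics

theorem HolderCont.continuous {A : Matrix (Fin l) (Fin l) ℕ} {φ : SigmaA l A → ℝ}
    (hφ : HolderCont φ) : Continuous φ := by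
  obtain ⟨C, s, hs, h⟩ := hφ
  refine continuous_iff_continuousAt.2 fun ω => Metric.tendsto_nhds.2 fun ε hε => ?_
  have hpow : ∀ n : ℕ, (2 : ℝ) ^ (-(s * n)) = ((2 : ℝ) ^ (-s)) ^ n := fun n => by
    rw [← Real.rpow_natCast, ← Real.rpow_mul two_pos.le, neg_mul]
  have hlim : Tendsto (fun n : ℕ => C * (2 : ℝ) ^ (-(s * n))) atTop (nhds (C * 0)) := by
    simp only [hpow]
    exact (tendsto_pow_atTop_nhds_zero_of_lt_one (by positivity)
      (Real.rpow_lt_one_of_one_lt_of_neg one_lt_two (neg_neg_of_pos hs))).const_mul C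
  rw [mul_zero] at hlim
  obtain ⟨n, hn⟩ := (hlim.eventually_lt_const hε).exists
  filter_upwards [(isOpen_cylinder (wordPrefix ω n)).mem_nhds (self_mem_cylinderAt ω n)] with υ hυ
  exact (h υ ω n (mem_cylinderAt.1 hυ)).trans_lt hn

section Branching

variable {A : Matrix (Fin l) (Fin l) ℕ}

theorem eq_of_pow_apply_pos_of_not_hasBranching (h01 : ∀ i j, A i j = 0 ∨ A i j = 1)
    (hbranch : ¬HasBranching A) {m : ℕ} {i j j' : Fin l} (h : 0 < (A ^ m) i j)
    (h' : 0 < (A ^ m) i j') : j = j' := by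
  induction m generalizing j j' with
  | zero =>
    have heq : ∀ {j}, 0 < (A ^ 0) i j → i = j := fun h => by
      by_contra hne
      simp [Matrix.one_apply_ne hne] at h
    exact (heq h).symm.trans (heq h')
  | succ m ih =>
    have hstep : ∀ {j}, 0 < (A ^ (m + 1)) i j → ∃ p, 0 < (A ^ m) i p ∧ A p j = 1 := fun {j} h => by
      rw [pow_succ, Matrix.mul_apply] at h
      obtain ⟨p, -, hp⟩ := Finset.exists_ne_zero_of_sum_ne_zero h.ne'
      exact ⟨p, Nat.pos_of_ne_zero (left_ne_zero_of_mul hp),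
        (h01 p j).resolve_left (right_ne_zero_of_mul hp)⟩
    obtain ⟨p, hp, hpj⟩ := hstep h
    obtain ⟨p', hp', hpj'⟩ := hstep h'
    obtain rfl := ih hp hp'
    by_contra hne
    exact hbranch ⟨p, j, j', hne, hpj, hpj'⟩

theorem Primitive.isIrreducible (hA : Primitive A) : IsIrreducible A :=
  ⟨hA.1, fun i j => hA.2.imp fun _ hn => ⟨hn.1, hn.2 i j⟩⟩

theorem Primitive.hasBranching (hA : Primitive A) (hl : 2 ≤ l) : HasBranching A := by
  obtain ⟨h01, n, -, hn⟩ := hA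
  have : Nontrivial (Fin l) := Fin.nontrivial_iff_two_le.2 hl
  obtain ⟨i, j, hij⟩ := exists_pair_ne (Fin l)
  by_contra hbranch
  exact hij (eq_of_pow_apply_pos_of_not_hasBranching h01 hbranch (hn i i) (hn i j))

end Branching

theorem xi_asymptotic_general {A : Matrix (Fin l) (Fin l) ℕ} (hA : IsIrreducible A)
    (hbranch : HasBranching A) {φ : SigmaA l A → ℝ} {P : ℝ} {ν : Measure (SigmaA l A)}
    [IsProbabilityMeasure ν] (hφ : AEStronglyMeasurable φ ν) (hν : IsGibbs φ P ν)
    (hinv : MeasurePreserving shift ν ν) :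
    0 < P - ∫ ω, φ ω ∂ν ∧ ∀ x : List (Fin l),
      Tendsto (fun r : ℝ => xiSum A ν x (Real.exp (-r)) / r) atTop
        (nhds (ν.real (cylinder A x) / (P - ∫ ω, φ ω ∂ν))) := by
  have hquasi := hν.isLowerQuasiBernoulli
  obtain ⟨θ, E, hθ, hdecay⟩ := hquasi.exists_cylinderAt_le_exp hA hbranch
  have hlim := hν.tendstoInMeasure_information_div hφ (hquasi.ergodic hA hinv)
  have hpos : 0 < P - ∫ ω, φ ω ∂ν :=
    hθ.trans_le (le_of_tendstoInMeasure_information hquasi.pos hlim hdecay)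
  exact ⟨hpos, tendsto_xiSum_div hpos hθ hquasi.pos hdecay hlim⟩

/-- For a `σ`-invariant Gibbs measure `ν` with pressure `P`,
`h := P − ∫ φ dν > 0` and for every `x ∈ Σ_A^* ∪ {∅}` one has
`Ξ_x(e^{−r}) ∼ ν([x]) r / h` as `r → ∞`. -/
theorem xi_asymptotic
    (hl : 2 ≤ l) (A : Matrix (Fin l) (Fin l) ℕ) (hA : Primitive A)
    (φ : SigmaA l A → ℝ) (hφ : HolderCont φ) (P : ℝ)
    (ν : Measure (SigmaA l A)) [IsProbabilityMeasure ν] (hGibbs : IsGibbs φ P ν)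
    (hinv : ∀ B : Set (SigmaA l A), MeasurableSet B → ν (shift ⁻¹' B) = ν B) :
    0 < P - ∫ ω, φ ω ∂ν ∧
      ∀ x : List (Fin l), x = [] ∨ Admissible A x →
        Tendsto (fun r : ℝ => xiSum A ν x (Real.exp (-r)) / r) atTop
          (nhds ((ν (cylinder A x)).toReal / (P - ∫ ω, φ ω ∂ν))) := by
  have hpres : MeasurePreserving (shift : SigmaA l A → SigmaA l A) ν ν :=
    ⟨continuous_shift.measurable, Measure.ext fun B hB => by
      rw [Measure.map_apply continuous_shift.measurable hB, hinv B hB]⟩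
  exact (xi_asymptotic_general hA.isIrreducible (hA.hasBranching hl)
    hφ.continuous.aestronglyMeasurable hGibbs hpres).imp_right fun h x _ => h x

end SFT
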